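/- Fix M > 0, let f(λ) = (1/(2πi)) ∫_{γ_M} exp(exp(−ζ²))·e^{ζ λ} dζ for λ ∈ ℝ, and for x ∈ ℝ and t > 0 define H(x,t) = ∫_ℝ e^{−tλ²}·e^{ixλ}·f(λ) dλ. Then H is well defined (the integrand is Lebesgue integrable for every t > 0), H is smooth on ℝ × (0,∞) and satisfies the heat equation ∂H/∂t (x,t) = ∂²H/∂x² (x,t) for all x ∈ ℝ and t > 0, H(x,t) → 0 as t → 0⁺ for every x ∈ ℝ, and H is not identically zero on ℝ × (0,∞). Hence H is a non-trivial solution of the Cauchy initial value problem for the heat equation with zero initial data. -/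

import Mathlib

open MeasureTheory intervalIntegral Filter

/-- The contour integral of `g` along the clockwise contour `γ_M`, consisting of the
right branch `{π/(2τ)+iτ : τ ≥ M}` traversed downward, the horizontal segment
`{σ+iM : |σ| ≤ π/(2M)}` traversed right to left, and the left branch
`{−π/(2τ)+iτ : τ ≥ M}` traversed upward. -/
noncomputable def gammaInt (M : ℝ) (g : ℂ → ℂ) : ℂ :=
  (∫ τ in Set.Ioi M, g (((-(Real.pi / (2 * τ)) : ℝ) : ℂ) + τ * Complex.I) *
      (((Real.pi / (2 * τ ^ 2) : ℝ) : ℂ) + Complex.I))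
  - (∫ τ in Set.Ioi M, g (((Real.pi / (2 * τ) : ℝ) : ℂ) + τ * Complex.I) *
      (Complex.I - ((Real.pi / (2 * τ ^ 2) : ℝ) : ℂ)))
  - ∫ σ in (-(Real.pi / (2 * M)))..(Real.pi / (2 * M)), g ((σ : ℂ) + M * Complex.I)

/-- Absolute convergence of the three parametrized Lebesgue integrals defining the
contour integral of `g` along `γ_M`. -/
def GammaIntegrable (M : ℝ) (g : ℂ → ℂ) : Prop :=
  MeasureTheory.IntegrableOn (fun τ : ℝ =>
    g (((-(Real.pi / (2 * τ)) : ℝ) : ℂ) + τ * Complex.I) *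
      (((Real.pi / (2 * τ ^ 2) : ℝ) : ℂ) + Complex.I)) (Set.Ioi M) ∧
  MeasureTheory.IntegrableOn (fun τ : ℝ =>
    g (((Real.pi / (2 * τ) : ℝ) : ℂ) + τ * Complex.I) *
      (Complex.I - ((Real.pi / (2 * τ ^ 2) : ℝ) : ℂ))) (Set.Ioi M) ∧
  IntervalIntegrable (fun σ : ℝ => g ((σ : ℂ) + M * Complex.I))
    MeasureTheory.volume (-(Real.pi / (2 * M))) (Real.pi / (2 * M))

/-- The trace (image) of the contour `γ_M`. -/
def gammaTrace (M : ℝ) : Set ℂ :=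
  {ζ : ℂ | (M ≤ ζ.im ∧ |ζ.re| = Real.pi / (2 * ζ.im)) ∨
    (ζ.im = M ∧ |ζ.re| ≤ Real.pi / (2 * M))}

/-- The open region `D_M` lying to the right of `γ_M` as it is traversed clockwise. -/
def DM (M : ℝ) : Set ℂ := {ζ : ℂ | M < ζ.im ∧ |ζ.re| < Real.pi / (2 * ζ.im)}

/-!
The integrand `exp (exp (-ζ²)) e^{ζλ}` is entire and decays along the branches, so `f` does not
depend on the height `M` of the contour. Integrating out `λ` gives
`H(x, t) = (1/2πi) √(π/t) ∫_{γ_M} exp (exp (-ζ²)) exp ((ix + ζ)² / 4t) dζ`, and for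
`M ≥ |x| + 2` the real part of `(ix + ζ)²` is at most `-1` on `γ_M`, so that `H(x, t)` is
`O(t^{-1/2} e^{-1/4t})`. If `H(·, 1/4)` vanished, so would the derivative at `x = 0` of
`∫_{γ_M} exp (exp (-ζ²)) e^{ζ²} e^{2ixζ} dζ`, which is a multiple of
`∫_{γ_M} ζ e^{ζ²} exp (exp (-ζ²)) dζ`. On the branches `ζ dζ` and `exp (ζ²)` only depend on the
height, so the branches cancel and the segment gives `-πi`.
-/

open scoped Topology

/-- The separated solution `(x, t) ↦ e^{-tλ²} e^{ixλ}` of the heat equation with frequency `lam`;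
the point of space-time is `q = (x, t)`. -/
noncomputable def heatMode (q : ℝ × ℝ) (lam : ℝ) : ℂ :=
  Complex.exp (-(q.2 : ℂ) * lam ^ 2) * Complex.exp (Complex.I * q.1 * lam)

lemma norm_heatMode (q : ℝ × ℝ) (lam : ℝ) : ‖heatMode q lam‖ = Real.exp (-q.2 * lam ^ 2) := by
  have hre : (-(q.2 : ℂ) * lam ^ 2).re = -q.2 * lam ^ 2 := by norm_cast
  rw [heatMode, norm_mul, mul_assoc, mul_comm Complex.I, ← Complex.ofReal_mul,
    Complex.norm_exp_ofReal_mul_I, mul_one, Complex.norm_exp, hre]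

lemma heatMode_zero_left (t lam : ℝ) : heatMode (0, t) lam = Real.exp (-t * lam ^ 2) := by
  simp [heatMode]

lemma continuous_heatMode (q : ℝ × ℝ) : Continuous (heatMode q) := by
  unfold heatMode; fun_prop

lemma hasFDerivAt_heatMode (q : ℝ × ℝ) (lam : ℝ) :
    HasFDerivAt (fun p => heatMode p lam)
      ((ContinuousLinearMap.fst ℝ ℝ ℝ).smulRight (heatMode q lam * (Complex.I * lam)) +
        (ContinuousLinearMap.snd ℝ ℝ ℝ).smulRight (heatMode q lam * (Complex.I * lam) ^ 2)) q := by
  have hx : HasFDerivAt (fun p : ℝ × ℝ => (p.1 : ℂ)) _ q :=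
    Complex.ofRealCLM.hasFDerivAt.comp q hasFDerivAt_fst
  have ht : HasFDerivAt (fun p : ℝ × ℝ => (p.2 : ℂ)) _ q :=
    Complex.ofRealCLM.hasFDerivAt.comp q hasFDerivAt_snd
  refine ((ht.fun_neg.mul_const ((lam : ℂ) ^ 2)).cexp.mul
    ((hx.const_mul Complex.I).mul_const (lam : ℂ)).cexp).congr_fderiv ?_
  ext <;> simp [heatMode, mul_pow, mul_comm, mul_left_comm, mul_assoc]

section HeatEvolution

variable {E : Type*} [NormedAddCommGroup E] [NormedSpace ℂ E] {f : ℝ → E}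

/-- Integrability against all Gaussians, the condition under which the heat evolution of the
spectral density `f` converges at all positive times. -/
def GaussianIntegrable (f : ℝ → E) : Prop :=
  ∀ t : ℝ, 0 < t → Integrable fun lam : ℝ => Real.exp (-t * lam ^ 2) • f lam

/-- The superposition `u(x, t) = ∫ e^{-tλ²} e^{ixλ} f(λ) dλ` of heat modes with spectral
density `f`. -/
noncomputable def heatEvolution (f : ℝ → E) (q : ℝ × ℝ) : E :=
  ∫ lam : ℝ, heatMode q lam • f lam

/-- Multiplication by the symbol `iλ` of `∂/∂x`, which turns the spectral density of `u` into that
of `∂u/∂x`. -/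
noncomputable def spectralDeriv (f : ℝ → E) (lam : ℝ) : E :=
  (Complex.I * lam) • f lam

lemma GaussianIntegrable.aestronglyMeasurable (hf : GaussianIntegrable f) :
    AEStronglyMeasurable f := by
  have hexp : Continuous fun lam : ℝ => Real.exp (lam ^ 2) := by fun_prop
  have h : AEStronglyMeasurable fun lam : ℝ =>
      Real.exp (lam ^ 2) • Real.exp (-1 * lam ^ 2) • f lam :=
    hexp.aestronglyMeasurable.smul (hf 1 one_pos).1
  refine h.congr (Eventually.of_forall fun lam => ?_)
  simp only [smul_smul, ← Real.exp_add, neg_one_mul, add_neg_cancel, Real.exp_zero, one_smul]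

lemma GaussianIntegrable.integrable_norm (hf : GaussianIntegrable f) {t : ℝ} (ht : 0 < t) :
    Integrable fun lam : ℝ => Real.exp (-t * lam ^ 2) * ‖f lam‖ := by
  simpa only [norm_smul, Real.norm_eq_abs, Real.abs_exp] using (hf t ht).norm

lemma GaussianIntegrable.of_integrable_heatMode
    (h : ∀ t : ℝ, 0 < t → Integrable fun lam => heatMode (0, t) lam • f lam) :
    GaussianIntegrable f := fun t ht => by
  simpa only [heatMode_zero_left, Complex.coe_smul] using h t ht

lemma GaussianIntegrable.integrable_heatMode_smul (hf : GaussianIntegrable f) {q : ℝ × ℝ}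
    (hq : 0 < q.2) : Integrable fun lam => heatMode q lam • f lam := by
  refine (hf.integrable_norm hq).mono'
    ((continuous_heatMode q).aestronglyMeasurable.smul hf.aestronglyMeasurable)
    (Eventually.of_forall fun lam => ?_)
  rw [norm_smul, norm_heatMode]

lemma abs_le_mul_exp_mul_sq {t : ℝ} (ht : 0 < t) (s : ℝ) :
    |s| ≤ (1 + 1 / t) * Real.exp (t * s ^ 2) :=
  calc |s| ≤ 1 + s ^ 2 := by nlinarith [sq_nonneg (|s| - 1), sq_abs s]
    _ ≤ (1 + 1 / t) * (t * s ^ 2 + 1) := by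
      have hexpand : (1 + 1 / t) * (t * s ^ 2 + 1) = 1 + s ^ 2 + (t * s ^ 2 + 1 / t) := by
        field_simp; ring
      rw [hexpand]
      exact le_add_of_nonneg_right (by positivity)
    _ ≤ (1 + 1 / t) * Real.exp (t * s ^ 2) := by
      gcongr
      exact Real.add_one_le_exp _

lemma GaussianIntegrable.spectralDeriv (hf : GaussianIntegrable f) :
    GaussianIntegrable (spectralDeriv f) := by
  intro t ht
  have hexp : Continuous fun lam : ℝ => Real.exp (-t * lam ^ 2) := by fun_prop
  have hsymbol : Continuous fun lam : ℝ => Complex.I * lam := by fun_prop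
  refine ((hf.integrable_norm (half_pos ht)).const_mul (1 + 1 / (t / 2))).mono'
    (hexp.aestronglyMeasurable.smul
      (hsymbol.aestronglyMeasurable.smul hf.aestronglyMeasurable))
    (Eventually.of_forall fun lam => ?_)
  have hsplit : Real.exp (-t * lam ^ 2) * Real.exp (t / 2 * lam ^ 2) =
      Real.exp (-(t / 2) * lam ^ 2) := by
    rw [← Real.exp_add]; ring_nf
  calc ‖Real.exp (-t * lam ^ 2) • (Complex.I * lam) • f lam‖
      = Real.exp (-t * lam ^ 2) * (|lam| * ‖f lam‖) := by
        simp only [norm_smul, norm_mul, Complex.norm_I, Complex.norm_real, Real.norm_eq_abs,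
          Real.abs_exp, one_mul]
    _ ≤ Real.exp (-t * lam ^ 2) *
        ((1 + 1 / (t / 2)) * Real.exp (t / 2 * lam ^ 2) * ‖f lam‖) := by
        gcongr
        exact abs_le_mul_exp_mul_sq (half_pos ht) lam
    _ = (1 + 1 / (t / 2)) *
        (Real.exp (-t * lam ^ 2) * Real.exp (t / 2 * lam ^ 2) * ‖f lam‖) := by ring
    _ = _ := by rw [hsplit]

variable [CompleteSpace E]

lemma hasFDerivAt_heatEvolution (hf : GaussianIntegrable f) {q : ℝ × ℝ} (hq : 0 < q.2) :
    HasFDerivAt (heatEvolution f)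
      ((ContinuousLinearMap.fst ℝ ℝ ℝ).smulRight (heatEvolution (spectralDeriv f) q) +
        (ContinuousLinearMap.snd ℝ ℝ ℝ).smulRight
          (heatEvolution (spectralDeriv (spectralDeriv f)) q)) q := by
  let dx := ContinuousLinearMap.smulRightL ℝ (ℝ × ℝ) E (.fst ℝ ℝ ℝ)
  let dt := ContinuousLinearMap.smulRightL ℝ (ℝ × ℝ) E (.snd ℝ ℝ ℝ)
  have hx := hf.spectralDeriv.integrable_heatMode_smul hq
  have ht := hf.spectralDeriv.spectralDeriv.integrable_heatMode_smul hq
  have hbound := ((hf.spectralDeriv.integrable_norm (half_pos hq)).const_mul ‖dx‖).add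
    ((hf.spectralDeriv.spectralDeriv.integrable_norm (half_pos hq)).const_mul ‖dt‖)
  have hnhds : {p : ℝ × ℝ | q.2 / 2 < p.2} ∈ 𝓝 q :=
    (isOpen_lt continuous_const continuous_snd).mem_nhds (half_lt_self hq)
  have hderiv := hasFDerivAt_integral_of_dominated_of_fderiv_le (𝕜 := ℝ)
    (F := fun p lam => heatMode p lam • f lam)
    (F' := fun p lam => dx (heatMode p lam • spectralDeriv f lam) +
      dt (heatMode p lam • spectralDeriv (spectralDeriv f) lam)) hnhds
    (Eventually.of_forall fun p =>
      (continuous_heatMode p).aestronglyMeasurable.smul hf.aestronglyMeasurable)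
    (hf.integrable_heatMode_smul hq)
    ((dx.integrable_comp hx).add (dt.integrable_comp ht)).1
    (Eventually.of_forall fun lam p hp => ?_) hbound (Eventually.of_forall fun lam p _ => ?_)
  · rwa [integral_add (dx.integrable_comp hx) (dt.integrable_comp ht), dx.integral_comp_comm hx,
      dt.integral_comp_comm ht] at hderiv
  · have hmode (v : E) : ‖heatMode p lam • v‖ ≤ Real.exp (-(q.2 / 2) * lam ^ 2) * ‖v‖ := by
      rw [norm_smul, norm_heatMode]
      have hp' : q.2 / 2 ≤ p.2 := le_of_lt hp
      gcongr
    exact (norm_add_le _ _).trans (add_le_add (dx.le_opNorm_of_le (hmode _))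
      (dt.le_opNorm_of_le (hmode _)))
  · refine ((hasFDerivAt_heatMode p lam).smul_const (f lam)).congr_fderiv ?_
    ext <;> simp [dx, dt, spectralDeriv, smul_smul, mul_assoc, sq]

lemma hasDerivAt_heatEvolution_space (hf : GaussianIntegrable f) (x : ℝ) {t : ℝ} (ht : 0 < t) :
    HasDerivAt (fun ξ => heatEvolution f (ξ, t)) (heatEvolution (spectralDeriv f) (x, t)) x := by
  simpa [Function.comp_def] using (hasFDerivAt_heatEvolution hf (q := (x, t)) ht).comp_hasDerivAt x
    ((hasDerivAt_id x).prodMk (hasDerivAt_const x t))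

lemma hasDerivAt_heatEvolution_time (hf : GaussianIntegrable f) (x : ℝ) {t : ℝ} (ht : 0 < t) :
    HasDerivAt (fun τ => heatEvolution f (x, τ))
      (heatEvolution (spectralDeriv (spectralDeriv f)) (x, t)) t := by
  simpa [Function.comp_def] using (hasFDerivAt_heatEvolution hf (q := (x, t)) ht).comp_hasDerivAt t
    ((hasDerivAt_const t x).prodMk (hasDerivAt_id t))

lemma deriv_time_heatEvolution_eq_iteratedDeriv_two (hf : GaussianIntegrable f) (x : ℝ) {t : ℝ}
    (ht : 0 < t) :
    deriv (fun τ => heatEvolution f (x, τ)) t =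
      iteratedDeriv 2 (fun ξ => heatEvolution f (ξ, t)) x := by
  have hspace : deriv (fun ξ => heatEvolution f (ξ, t)) =
      fun ξ => heatEvolution (spectralDeriv f) (ξ, t) :=
    funext fun ξ => (hasDerivAt_heatEvolution_space hf ξ ht).deriv
  rw [(hasDerivAt_heatEvolution_time hf x ht).deriv, iteratedDeriv_succ, iteratedDeriv_one, hspace,
    (hasDerivAt_heatEvolution_space hf.spectralDeriv x ht).deriv]

lemma contDiffOn_heatEvolution (hf : GaussianIntegrable f) :
    ContDiffOn ℝ (⊤ : ℕ∞) (heatEvolution f) (Set.univ ×ˢ Set.Ioi 0) := by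
  have hopen : IsOpen ((Set.univ : Set ℝ) ×ˢ Set.Ioi (0 : ℝ)) := isOpen_univ.prod isOpen_Ioi
  refine contDiffOn_infty.2 fun n => ?_
  induction n generalizing f with
  | zero =>
    exact contDiffOn_zero.2 fun q hq =>
      (hasFDerivAt_heatEvolution hf hq.2).continuousAt.continuousWithinAt
  | succ n ih =>
    push_cast
    rw [contDiffOn_succ_iff_hasFDerivWithinAt_of_uniqueDiffOn hopen.uniqueDiffOn]
    exact ⟨by simp, _, (contDiffOn_const.smulRight (ih hf.spectralDeriv)).add
      (contDiffOn_const.smulRight (ih hf.spectralDeriv.spectralDeriv)),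
      fun q hq => (hasFDerivAt_heatEvolution hf hq.2).hasFDerivWithinAt⟩

end HeatEvolution

lemma integrable_exp_neg_mul_sq_add_mul_abs {t : ℝ} (ht : 0 < t) (c : ℝ) :
    Integrable fun s : ℝ => Real.exp (-t * s ^ 2 + c * |s|) := by
  have hlin (d : ℝ) : Integrable fun s : ℝ => Real.exp (-t * s ^ 2 + d * s) := by
    refine (integrable_cexp_quadratic (b := t) (by simpa using ht) d 0).norm.congr
      (Eventually.of_forall fun s => ?_)
    simp only [add_zero, Complex.norm_exp]
    congr 1
    norm_cast
  refine ((hlin c).add (hlin (-c))).mono' (Continuous.aestronglyMeasurable (by fun_prop))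
    (Eventually.of_forall fun s => ?_)
  rw [Real.norm_eq_abs, Real.abs_exp]
  rcases abs_choice s with hs | hs <;> rw [hs]
  · exact le_add_of_nonneg_right (Real.exp_pos _).le
  · rw [mul_neg, ← neg_mul]
    exact le_add_of_nonneg_left (Real.exp_pos _).le

lemma integral_heatMode_mul_cexp (x : ℝ) {t : ℝ} (ht : 0 < t) (z : ℂ) :
    ∫ lam : ℝ, heatMode (x, t) lam * Complex.exp (z * lam) =
      √(Real.pi / t) * Complex.exp ((Complex.I * x + z) ^ 2 / (4 * t)) := by
  have hsqrt : ((Real.pi : ℂ) / - -(t : ℂ)) ^ (1 / 2 : ℂ) = (√(Real.pi / t) : ℝ) := by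
    rw [neg_neg, Real.sqrt_eq_rpow, Complex.ofReal_cpow (by positivity)]
    norm_num
  have hgauss := integral_cexp_quadratic (b := -(t : ℂ)) (by simpa using ht)
    (Complex.I * x + z) 0
  rw [hsqrt, zero_sub, mul_neg, div_neg, neg_neg] at hgauss
  rw [← hgauss]
  congr 1 with lam
  rw [heatMode, ← Complex.exp_add, ← Complex.exp_add]
  ring_nf

section GaussianFubini

variable {α : Type*} [MeasurableSpace α] {μ : Measure α}
  {z w : α → ℂ} {A : ℝ} {q : ℝ × ℝ}

lemma integrable_heatMode_mul_cexp_prod (hz : AEStronglyMeasurable z μ)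
    (hA : ∀ᵐ a ∂μ, |(z a).re| ≤ A) (hw : Integrable w μ) (hq : 0 < q.2) :
    Integrable (fun y : ℝ × α => heatMode q y.1 * (w y.2 * Complex.exp (z y.2 * y.1)))
      (volume.prod μ) := by
  have hexp : AEStronglyMeasurable (fun y : ℝ × α => Complex.exp (z y.2 * y.1))
      (volume.prod μ) :=
    Complex.continuous_exp.comp_aestronglyMeasurable
      (hz.comp_snd.mul (Complex.continuous_ofReal.measurable.comp
        measurable_fst).aestronglyMeasurable)
  refine ((integrable_exp_neg_mul_sq_add_mul_abs hq A).mul_prod hw.norm).mono'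
    ((continuous_heatMode q).aestronglyMeasurable.comp_fst.mul (hw.1.comp_snd.mul hexp)) ?_
  filter_upwards [Measure.quasiMeasurePreserving_snd.ae hA] with y hy
  have hre : (z y.2).re * y.1 ≤ A * |y.1| :=
    (le_abs_self _).trans (by rw [abs_mul]; gcongr)
  calc ‖heatMode q y.1 * (w y.2 * Complex.exp (z y.2 * y.1))‖
      = Real.exp (-q.2 * y.1 ^ 2 + (z y.2).re * y.1) * ‖w y.2‖ := by
        rw [norm_mul, norm_mul, norm_heatMode, Complex.norm_exp, Complex.re_mul_ofReal,
          Real.exp_add]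
        ring
    _ ≤ Real.exp (-q.2 * y.1 ^ 2 + A * |y.1|) * ‖w y.2‖ := by gcongr

variable [SFinite μ]

lemma integrable_heatMode_mul_integral (hz : AEStronglyMeasurable z μ)
    (hA : ∀ᵐ a ∂μ, |(z a).re| ≤ A) (hw : Integrable w μ) (hq : 0 < q.2) :
    Integrable fun lam : ℝ => heatMode q lam * ∫ a, w a * Complex.exp (z a * lam) ∂μ := by
  simpa only [MeasureTheory.integral_const_mul] using
    (integrable_heatMode_mul_cexp_prod hz hA hw hq).integral_prod_left

lemma integral_heatMode_mul_integral (hz : AEStronglyMeasurable z μ)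
    (hA : ∀ᵐ a ∂μ, |(z a).re| ≤ A) (hw : Integrable w μ) (x : ℝ) {t : ℝ} (ht : 0 < t) :
    ∫ lam : ℝ, heatMode (x, t) lam * ∫ a, w a * Complex.exp (z a * lam) ∂μ =
      √(Real.pi / t) * ∫ a, w a * Complex.exp ((Complex.I * x + z a) ^ 2 / (4 * t)) ∂μ := by
  simp only [← MeasureTheory.integral_const_mul]
  rw [integral_integral_swap (integrable_heatMode_mul_cexp_prod hz hA hw (q := (x, t)) ht)]
  congr 1 with a
  simp only [mul_left_comm _ (w a)]
  rw [MeasureTheory.integral_const_mul, integral_heatMode_mul_cexp x ht]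

end GaussianFubini

section ExponentialTransform

variable {α : Type*} [MeasurableSpace α] {μ : Measure α} {v z : α → ℂ} {c : ℝ}

lemma hasDerivAt_integral_mul_cexp_zero (hc : 0 < c) (hz : AEStronglyMeasurable z μ)
    (hv : AEStronglyMeasurable v μ) (hvz : Integrable (fun a => ‖v a‖ * Real.exp (c * ‖z a‖)) μ) :
    HasDerivAt (fun s : ℂ => ∫ a, v a * Complex.exp (s * z a) ∂μ) (∫ a, v a * z a ∂μ) 0 := by
  have hexp (s : ℂ) : AEStronglyMeasurable (fun a => Complex.exp (s * z a)) μ :=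
    Complex.continuous_exp.comp_aestronglyMeasurable (hz.const_mul s)
  have hint : Integrable (fun a => v a * Complex.exp (0 * z a)) μ := by
    refine hvz.mono' (hv.mul (hexp 0)) (Eventually.of_forall fun a => ?_)
    rw [norm_mul, zero_mul, Complex.exp_zero, norm_one]
    gcongr
    exact Real.one_le_exp (by positivity)
  have hbound (a : α) (s : ℂ) (hs : s ∈ Metric.ball (0 : ℂ) (c / 2)) :
      ‖v a * (Complex.exp (s * z a) * z a)‖ ≤ 2 / c * (‖v a‖ * Real.exp (c * ‖z a‖)) := by
    have hs' : ‖s * z a‖ ≤ c / 2 * ‖z a‖ := by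
      rw [norm_mul]
      gcongr
      exact (mem_ball_zero_iff.1 hs).le
    have hz' : ‖z a‖ ≤ 2 / c * Real.exp (c / 2 * ‖z a‖) := by
      rw [← div_le_iff₀' (by positivity), div_div_eq_mul_div, mul_comm, mul_div_right_comm]
      linarith [Real.add_one_le_exp (c / 2 * ‖z a‖)]
    calc ‖v a * (Complex.exp (s * z a) * z a)‖
        = ‖v a‖ * (‖Complex.exp (s * z a)‖ * ‖z a‖) := by rw [norm_mul, norm_mul]
      _ ≤ ‖v a‖ * (Real.exp (c / 2 * ‖z a‖) * (2 / c * Real.exp (c / 2 * ‖z a‖))) := by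
        gcongr
        exact (Complex.norm_exp_le_exp_norm _).trans (Real.exp_le_exp.2 hs')
      _ = 2 / c * (‖v a‖ * (Real.exp (c / 2 * ‖z a‖) * Real.exp (c / 2 * ‖z a‖))) := by ring
      _ = 2 / c * (‖v a‖ * Real.exp (c * ‖z a‖)) := by rw [← Real.exp_add]; ring_nf
  have hderiv := (hasDerivAt_integral_of_dominated_loc_of_deriv_le
    (F := fun s a => v a * Complex.exp (s * z a))
    (F' := fun s a => v a * (Complex.exp (s * z a) * z a))
    (Metric.ball_mem_nhds (0 : ℂ) (half_pos hc))
    (Eventually.of_forall fun s => hv.mul (hexp s)) hint (hv.mul ((hexp 0).mul hz))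
    (Eventually.of_forall hbound) (hvz.const_mul (2 / c))
    (Eventually.of_forall fun a s _ => by
      simpa using (((hasDerivAt_id s).mul_const (z a)).cexp.const_mul (v a)))).2
  simpa only [zero_mul, Complex.exp_zero, one_mul] using hderiv

lemma exists_integral_mul_cexp_ne_zero (hc : 0 < c) (hz : AEStronglyMeasurable z μ)
    (hv : AEStronglyMeasurable v μ) (hvz : Integrable (fun a => ‖v a‖ * Real.exp (c * ‖z a‖)) μ)
    (hne : ∫ a, v a * z a ∂μ ≠ 0) :
    ∃ s : ℝ, ∫ a, v a * Complex.exp (s * z a) ∂μ ≠ 0 := by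
  by_contra! hzero
  have hderiv := (hasDerivAt_integral_mul_cexp_zero hc hz hv hvz).comp_ofReal (z := 0)
  simp only [hzero] at hderiv
  exact hne (hderiv.unique (hasDerivAt_const 0 0))

end ExponentialTransform

/-- The branch of `γ_M` on which `Re ζ` has the sign `ε = ±1`, parametrized by `τ = Im ζ`. -/
noncomputable def branch (ε τ : ℝ) : ℂ := ((ε * (Real.pi / (2 * τ)) : ℝ) : ℂ) + τ * Complex.I

/-- The velocity of `branch`, in the form in which it enters `gammaInt`. -/
noncomputable def branchDeriv (ε τ : ℝ) : ℂ :=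
  Complex.I - ((ε * (Real.pi / (2 * τ ^ 2)) : ℝ) : ℂ)

section Branch

variable {ε τ : ℝ}

lemma branch_re (ε τ : ℝ) : (branch ε τ).re = ε * (Real.pi / (2 * τ)) := by
  rw [branch, Complex.add_re, Complex.ofReal_re, Complex.re_ofReal_mul, Complex.I_re, mul_zero,
    add_zero]

lemma branch_im (ε τ : ℝ) : (branch ε τ).im = τ := by
  rw [branch, Complex.add_im, Complex.ofReal_im, Complex.im_ofReal_mul, Complex.I_im, mul_one,
    zero_add]

lemma measurable_branch (ε : ℝ) : Measurable (branch ε) := by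
  unfold branch; fun_prop

lemma measurable_branchDeriv (ε : ℝ) : Measurable (branchDeriv ε) := by
  unfold branchDeriv; fun_prop

lemma measurable_branch_prodMk (ε : ℝ) : Measurable fun τ => (branch ε τ, branchDeriv ε τ) :=
  (measurable_branch ε).prodMk (measurable_branchDeriv ε)

lemma measurable_branch_prodMk_neg (ε : ℝ) : Measurable fun τ => (branch ε τ, -branchDeriv ε τ) :=
  (measurable_branch ε).prodMk (measurable_branchDeriv ε).neg

lemma hasDerivAt_branch (ε : ℝ) (hτ : τ ≠ 0) :
    HasDerivAt (branch ε) (branchDeriv ε τ) τ := by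
  have hre : HasDerivAt (fun s : ℝ => ε * (Real.pi / (2 * s)))
      (-(ε * (Real.pi / (2 * τ ^ 2)))) τ := by
    refine (((hasDerivAt_const τ Real.pi).fun_div ((hasDerivAt_id τ).const_mul 2)
      (by simpa using hτ)).const_mul ε).congr_deriv ?_
    simp only [id_eq]
    field_simp
    ring
  have him : HasDerivAt (fun s : ℝ => (s : ℂ) * Complex.I) Complex.I τ := by
    simpa using (hasDerivAt_id τ).ofReal_comp.mul_const Complex.I
  refine (hre.ofReal_comp.add him).congr_deriv ?_
  rw [branchDeriv, Complex.ofReal_neg, neg_add_eq_sub]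

lemma branch_sq (hε : |ε| = 1) (hτ : τ ≠ 0) :
    branch ε τ ^ 2 =
      ((Real.pi ^ 2 / (4 * τ ^ 2) - τ ^ 2 : ℝ) : ℂ) + ε * (Real.pi * Complex.I) := by
  have hε' : (ε : ℂ) ^ 2 = 1 := by
    exact_mod_cast (sq_abs ε).symm.trans (by rw [hε, one_pow])
  have hτ' : (τ : ℂ) ≠ 0 := by exact_mod_cast hτ
  rw [branch]
  push_cast
  field_simp
  linear_combination 4 * (Real.pi : ℂ) ^ 2 * hε' + 16 * (τ : ℂ) ^ 4 * Complex.I_sq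

lemma exp_branch_sq (hε : |ε| = 1) (hτ : τ ≠ 0) :
    Complex.exp (branch ε τ ^ 2) = -(Real.exp (Real.pi ^ 2 / (4 * τ ^ 2) - τ ^ 2) : ℂ) := by
  have hsign : Complex.exp (ε * (Real.pi * Complex.I)) = -1 := by
    rcases eq_or_eq_neg_of_abs_eq hε with rfl | rfl <;> simp [Complex.exp_neg]
  rw [branch_sq hε hτ, Complex.exp_add, hsign, Complex.ofReal_exp, mul_neg_one]

lemma branch_mem_gammaTrace {M : ℝ} (hM : 0 < M) (hε : |ε| = 1) (hτ : M ≤ τ) :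
    branch ε τ ∈ gammaTrace M := by
  have hτ0 : 0 < τ := hM.trans_le hτ
  refine Or.inl ⟨by rwa [branch_im], ?_⟩
  rw [branch_re, branch_im, abs_mul, hε, one_mul, abs_of_pos (by positivity)]

lemma norm_branchDeriv_le {M : ℝ} (hM : 0 < M) (hε : |ε| = 1) (hτ : M ≤ τ) :
    ‖branchDeriv ε τ‖ ≤ 1 + Real.pi / (2 * M ^ 2) := by
  have hτ0 : 0 < τ := hM.trans_le hτ
  refine (norm_sub_le _ _).trans ?_
  rw [Complex.norm_I, Complex.norm_real, Real.norm_eq_abs, abs_mul, hε, one_mul,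
    abs_of_pos (by positivity)]
  gcongr

end Branch

section Contour

variable {M : ℝ} {g : ℂ → ℂ} {ζ : ℂ}

lemma abs_re_le_of_mem_gammaTrace (hM : 0 < M) (hζ : ζ ∈ gammaTrace M) :
    |ζ.re| ≤ Real.pi / (2 * M) := by
  rcases hζ with ⟨him, hre⟩ | ⟨-, hre⟩
  · rw [hre]
    gcongr
  · exact hre

lemma le_im_of_mem_gammaTrace (hζ : ζ ∈ gammaTrace M) : M ≤ ζ.im :=
  hζ.elim And.left fun h => h.1.ge

lemma measurableSet_gammaTrace (M : ℝ) : MeasurableSet (gammaTrace M) := by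
  have hre : Measurable fun ζ : ℂ => |ζ.re| := Complex.continuous_re.abs.measurable
  have him := Complex.measurable_im
  exact ((measurableSet_le measurable_const him).inter
    (measurableSet_eq_fun hre (by fun_prop))).union
      ((measurableSet_eq_fun him measurable_const).inter (measurableSet_le hre measurable_const))

/-- The contour `γ_M` as a positive measure on pairs `(ζ, ζ')` of a point and the velocity of the
traversal there, so that `∫_{γ_M} g(ζ) dζ` is the single integral of `g ζ * ζ'`. -/
noncomputable def contourMeasure (M : ℝ) : Measure (ℂ × ℂ) :=
  (volume.restrict (Set.Ioi M)).map (fun τ => (branch (-1) τ, branchDeriv (-1) τ)) +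
    (volume.restrict (Set.Ioi M)).map (fun τ => (branch 1 τ, -branchDeriv 1 τ)) +
    (volume.restrict (Set.Ioc (-(Real.pi / (2 * M))) (Real.pi / (2 * M)))).map
      (fun σ : ℝ => ((σ : ℂ) + M * Complex.I, (-1 : ℂ)))

instance (M : ℝ) : SFinite (contourMeasure M) := by
  unfold contourMeasure; infer_instance

lemma branchDeriv_neg_one (τ : ℝ) :
    branchDeriv (-1) τ = ((Real.pi / (2 * τ ^ 2) : ℝ) : ℂ) + Complex.I := by
  rw [branchDeriv, neg_one_mul, Complex.ofReal_neg, sub_neg_eq_add, add_comm]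

lemma gammaInt_eq_branch (M : ℝ) (g : ℂ → ℂ) :
    gammaInt M g = (∫ τ in Set.Ioi M, g (branch (-1) τ) * branchDeriv (-1) τ)
      - (∫ τ in Set.Ioi M, g (branch 1 τ) * branchDeriv 1 τ)
      - ∫ σ in (-(Real.pi / (2 * M)))..(Real.pi / (2 * M)), g ((σ : ℂ) + M * Complex.I) := by
  simp only [gammaInt, branchDeriv_neg_one, branch, neg_one_mul]
  simp only [branchDeriv, one_mul]

lemma gammaIntegrable_iff_branch (M : ℝ) (g : ℂ → ℂ) :
    GammaIntegrable M g ↔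
      IntegrableOn (fun τ : ℝ => g (branch (-1) τ) * branchDeriv (-1) τ) (Set.Ioi M) ∧
      IntegrableOn (fun τ : ℝ => g (branch 1 τ) * branchDeriv 1 τ) (Set.Ioi M) ∧
      IntervalIntegrable (fun σ : ℝ => g ((σ : ℂ) + M * Complex.I))
        volume (-(Real.pi / (2 * M))) (Real.pi / (2 * M)) := by
  simp only [GammaIntegrable, branchDeriv_neg_one, branch, neg_one_mul]
  simp only [branchDeriv, one_mul]

lemma neg_pi_div_le_pi_div (hM : 0 < M) : -(Real.pi / (2 * M)) ≤ Real.pi / (2 * M) :=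
  neg_le_self (by positivity)

lemma gammaIntegrable_iff_integrable_contourMeasure (hM : 0 < M) (hg : Continuous g) :
    GammaIntegrable M g ↔ Integrable (fun p : ℂ × ℂ => g p.1 * p.2) (contourMeasure M) := by
  have hgp : Continuous fun p : ℂ × ℂ => g p.1 * p.2 := by fun_prop
  rw [gammaIntegrable_iff_branch,
    intervalIntegrable_iff_integrableOn_Ioc_of_le (neg_pi_div_le_pi_div hM), contourMeasure,
    integrable_add_measure, integrable_add_measure, and_assoc,
    integrable_map_measure hgp.aestronglyMeasurable
      (measurable_branch_prodMk (-1)).aemeasurable,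
    integrable_map_measure hgp.aestronglyMeasurable
      (measurable_branch_prodMk_neg 1).aemeasurable,
    integrable_map_measure hgp.aestronglyMeasurable (Measurable.aemeasurable (by fun_prop))]
  simp only [Function.comp_def, mul_neg, mul_one, integrable_fun_neg_iff, IntegrableOn]

lemma gammaInt_eq_integral_contourMeasure (hM : 0 < M) (hg : Continuous g)
    (hi : GammaIntegrable M g) : gammaInt M g = ∫ p, g p.1 * p.2 ∂contourMeasure M := by
  have hgp : Continuous fun p : ℂ × ℂ => g p.1 * p.2 := by fun_prop
  have hint := (gammaIntegrable_iff_integrable_contourMeasure hM hg).1 hi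
  rw [contourMeasure, integrable_add_measure, integrable_add_measure] at hint
  rw [contourMeasure, integral_add_measure (hint.1.1.add_measure hint.1.2) hint.2,
    integral_add_measure hint.1.1 hint.1.2,
    integral_map (measurable_branch_prodMk (-1)).aemeasurable
      hgp.aestronglyMeasurable,
    integral_map (measurable_branch_prodMk_neg 1).aemeasurable
      hgp.aestronglyMeasurable,
    integral_map (Measurable.aemeasurable (by fun_prop)) hgp.aestronglyMeasurable,
    gammaInt_eq_branch, integral_of_le (neg_pi_div_le_pi_div hM)]
  simp only [mul_neg, mul_one, MeasureTheory.integral_neg, ← sub_eq_add_neg]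

lemma ae_contourMeasure_mem_gammaTrace (hM : 0 < M) :
    ∀ᵐ p ∂contourMeasure M, p.1 ∈ gammaTrace M := by
  have hs : MeasurableSet {p : ℂ × ℂ | p.1 ∈ gammaTrace M} :=
    measurable_fst (measurableSet_gammaTrace M)
  rw [contourMeasure, ae_add_measure_iff, ae_add_measure_iff,
    ae_map_iff (measurable_branch_prodMk (-1)).aemeasurable hs,
    ae_map_iff (measurable_branch_prodMk_neg 1).aemeasurable hs,
    ae_map_iff (Measurable.aemeasurable (by fun_prop)) hs]
  refine ⟨⟨ae_restrict_of_forall_mem measurableSet_Ioi fun τ hτ => ?_,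
    ae_restrict_of_forall_mem measurableSet_Ioi fun τ hτ => ?_⟩,
    ae_restrict_of_forall_mem measurableSet_Ioc fun σ hσ => Or.inr ?_⟩
  · exact branch_mem_gammaTrace hM (by simp) (le_of_lt hτ)
  · exact branch_mem_gammaTrace hM (by simp) (le_of_lt hτ)
  · simpa [abs_le] using And.intro hσ.1.le hσ.2

lemma integral_branch_of_primitive {ε M' : ℝ} {G : ℂ → ℂ} (hM : 0 < M) (hMM' : M ≤ M')
    (hG : ∀ z, HasDerivAt G (g z) z)
    (hi : IntegrableOn (fun τ : ℝ => g (branch ε τ) * branchDeriv ε τ) (Set.Ioi M)) :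
    (∫ τ in Set.Ioi M, g (branch ε τ) * branchDeriv ε τ) =
      G (branch ε M') - G (branch ε M) +
        ∫ τ in Set.Ioi M', g (branch ε τ) * branchDeriv ε τ := by
  rw [← integral_interval_add_Ioi hi (hi.mono_set (Set.Ioi_subset_Ioi hMM'))]
  congr 1
  refine integral_eq_sub_of_hasDerivAt (f := fun τ => G (branch ε τ)) (fun τ hτ => ?_) ?_
  · rw [Set.uIcc_of_le hMM'] at hτ
    exact (hG (branch ε τ)).comp τ (hasDerivAt_branch ε (hM.trans_le hτ.1).ne')
  · rw [intervalIntegrable_iff_integrableOn_Ioc_of_le hMM']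
    exact hi.mono_set Set.Ioc_subset_Ioi_self

lemma integral_segment_of_primitive {G : ℂ → ℂ} (M : ℝ) (hg : Continuous g)
    (hG : ∀ z, HasDerivAt G (g z) z) :
    (∫ σ in (-(Real.pi / (2 * M)))..(Real.pi / (2 * M)), g ((σ : ℂ) + M * Complex.I)) =
      G (branch 1 M) - G (branch (-1) M) := by
  rw [branch, branch, one_mul, neg_one_mul]
  refine integral_eq_sub_of_hasDerivAt (f := fun σ : ℝ => G ((σ : ℂ) + M * Complex.I))
    (fun σ _ => ?_) (Continuous.intervalIntegrable (by fun_prop) _ _)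
  simpa [Function.comp_def] using (hG ((σ : ℂ) + M * Complex.I)).comp σ
    ((hasDerivAt_id σ).ofReal_comp.add_const (M * Complex.I))

lemma gammaInt_eq_of_le {M' : ℝ} (hM : 0 < M) (hMM' : M ≤ M') (hg : Differentiable ℂ g)
    (hi : GammaIntegrable M g) : gammaInt M g = gammaInt M' g := by
  obtain ⟨G, hG⟩ := hg.isExactOn_univ
  simp only [Set.mem_univ, forall_const] at hG
  rw [gammaIntegrable_iff_branch] at hi
  rw [gammaInt_eq_branch, gammaInt_eq_branch,
    integral_branch_of_primitive hM hMM' hG hi.1, integral_branch_of_primitive hM hMM' hG hi.2.1,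
    integral_segment_of_primitive M hg.continuous hG,
    integral_segment_of_primitive M' hg.continuous hG]
  ring

lemma integral_branch_neg_one_eq_integral_branch_one (hM : 0 < M) (h : ℂ → ℂ) :
    (∫ τ in Set.Ioi M, branch (-1) τ * h (Complex.exp (branch (-1) τ ^ 2)) * branchDeriv (-1) τ) =
      ∫ τ in Set.Ioi M, branch 1 τ * h (Complex.exp (branch 1 τ ^ 2)) * branchDeriv 1 τ := by
  refine setIntegral_congr_fun measurableSet_Ioi fun τ hτ => ?_
  have hτ0 : τ ≠ 0 := (hM.trans hτ).ne'
  have hmul : branch (-1) τ * branchDeriv (-1) τ = branch 1 τ * branchDeriv 1 τ := by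
    have hτ' : (τ : ℂ) ≠ 0 := by exact_mod_cast hτ0
    simp only [branch, branchDeriv]
    push_cast
    field_simp
    ring
  simp only [exp_branch_sq (ε := -1) (by simp) hτ0, exp_branch_sq (ε := 1) (by simp) hτ0]
  rw [mul_right_comm, hmul, mul_right_comm]

end Contour

/-- The entire function `exp (exp (-ζ²))`, which decays like `exp (-exp ((Im ζ)²))` along the
branches of the contours `γ_M`. -/
noncomputable def expExp (ζ : ℂ) : ℂ := Complex.exp (Complex.exp (-ζ ^ 2))

section ExpExp

variable {M : ℝ} {g : ℂ → ℂ} {C c : ℝ}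

@[fun_prop]
lemma differentiable_expExp : Differentiable ℂ expExp := by
  unfold expExp; fun_prop

@[fun_prop]
lemma continuous_expExp : Continuous expExp :=
  differentiable_expExp.continuous

lemma norm_expExp_branch_le {ε τ : ℝ} (hM : 0 < M) (hε : |ε| = 1) (hτ : M ≤ τ) :
    ‖expExp (branch ε τ)‖ ≤ Real.exp (Real.pi ^ 2 / (4 * M ^ 2)) * Real.exp (-τ ^ 2) := by
  have hτ0 : 0 < τ := hM.trans_le hτ
  have hdecay : Real.pi ^ 2 / (4 * τ ^ 2) ≤ Real.pi ^ 2 / (4 * M ^ 2) := by gcongr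
  rw [expExp, Complex.exp_neg, exp_branch_sq hε hτ0.ne', inv_neg, ← Complex.ofReal_inv,
    ← Real.exp_neg, ← Complex.ofReal_neg, Complex.norm_exp_ofReal, ← Real.exp_add, Real.exp_le_exp]
  linarith [Real.add_one_le_exp (-(Real.pi ^ 2 / (4 * τ ^ 2) - τ ^ 2))]

lemma norm_branch_le {ε τ : ℝ} (hM : 0 < M) (hε : |ε| = 1) (hτ : M ≤ τ) :
    ‖branch ε τ‖ ≤ Real.pi / (2 * M) + τ := by
  have hre := abs_re_le_of_mem_gammaTrace hM (branch_mem_gammaTrace hM hε hτ)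
  refine (Complex.norm_le_abs_re_add_abs_im _).trans (add_le_add hre ?_)
  rw [branch_im, abs_of_pos (hM.trans_le hτ)]

lemma integrableOn_branch_expExp_mul {ε : ℝ} (hM : 0 < M) (hε : |ε| = 1) (hg : Continuous g)
    (hc : 0 ≤ c) (hbound : ∀ ζ ∈ gammaTrace M, ‖g ζ‖ ≤ C * Real.exp (c * ‖ζ‖)) :
    IntegrableOn (fun τ => expExp (branch ε τ) * g (branch ε τ) * branchDeriv ε τ)
      (Set.Ioi M) := by
  have hcont : Continuous fun ζ => expExp ζ * g ζ := by fun_prop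
  refine ((integrable_exp_neg_mul_sq_add_mul_abs one_pos c).integrableOn.const_mul
    (Real.exp (Real.pi ^ 2 / (4 * M ^ 2)) * (C * Real.exp (c * (Real.pi / (2 * M)))) *
      (1 + Real.pi / (2 * M ^ 2)))).mono'
    ((hcont.measurable.comp (measurable_branch ε)).mul
      (measurable_branchDeriv ε)).aestronglyMeasurable
    (ae_restrict_of_forall_mem measurableSet_Ioi fun τ hτ => ?_)
  have hMτ : M ≤ τ := le_of_lt hτ
  have hgτ := hbound _ (branch_mem_gammaTrace hM hε hMτ)
  have hC : 0 ≤ C := nonneg_of_mul_nonneg_left ((norm_nonneg _).trans hgτ) (Real.exp_pos _)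
  calc ‖expExp (branch ε τ) * g (branch ε τ) * branchDeriv ε τ‖
      = ‖expExp (branch ε τ)‖ * ‖g (branch ε τ)‖ * ‖branchDeriv ε τ‖ := by
        rw [norm_mul, norm_mul]
    _ ≤ Real.exp (Real.pi ^ 2 / (4 * M ^ 2)) * Real.exp (-τ ^ 2) *
          (C * Real.exp (c * (Real.pi / (2 * M) + τ))) * (1 + Real.pi / (2 * M ^ 2)) := by
        gcongr
        · exact norm_expExp_branch_le hM hε hMτ
        · exact hgτ.trans (by gcongr; exact norm_branch_le hM hε hMτ)
        · exact norm_branchDeriv_le hM hε hMτ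
    _ = _ := by
        rw [neg_one_mul, abs_of_pos (hM.trans hτ), mul_add c, Real.exp_add, Real.exp_add]
        ring

lemma gammaIntegrable_expExp_mul (hM : 0 < M) (hg : Continuous g) (hc : 0 ≤ c)
    (hbound : ∀ ζ ∈ gammaTrace M, ‖g ζ‖ ≤ C * Real.exp (c * ‖ζ‖)) :
    GammaIntegrable M fun ζ => expExp ζ * g ζ :=
  (gammaIntegrable_iff_branch _ _).2
    ⟨integrableOn_branch_expExp_mul hM (by simp) hg hc hbound,
      integrableOn_branch_expExp_mul hM (by simp) hg hc hbound,
      Continuous.intervalIntegrable (by fun_prop) _ _⟩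

lemma gammaIntegrable_expExp_mul_cexp (hM : 0 < M) (s : ℂ) :
    GammaIntegrable M fun ζ => expExp ζ * Complex.exp (ζ * s) := by
  refine gammaIntegrable_expExp_mul (C := 1) hM (by fun_prop) (norm_nonneg s) fun ζ _ => ?_
  rw [one_mul, mul_comm ‖s‖, ← norm_mul]
  exact Complex.norm_exp_le_exp_norm _

lemma integrable_expExp (hM : 0 < M) :
    Integrable (fun p : ℂ × ℂ => expExp p.1 * p.2) (contourMeasure M) := by
  refine (gammaIntegrable_iff_integrable_contourMeasure hM continuous_expExp).1 ?_
  simpa using gammaIntegrable_expExp_mul_cexp hM 0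

lemma exists_primitive_mul_cexp_sq_mul_expExp :
    ∃ P : ℂ → ℂ, ∀ z, HasDerivAt (fun ζ =>
      (Complex.exp (ζ ^ 2) * expExp ζ + ζ ^ 2 - P (Complex.exp (-ζ ^ 2))) / 2)
      (expExp z * (z * Complex.exp (z ^ 2))) z := by
  have hentire : Differentiable ℂ (dslope Complex.exp 0) := differentiableOn_univ.1 <|
    (Complex.differentiableOn_dslope univ_mem).2 Complex.differentiable_exp.differentiableOn
  obtain ⟨P, hP⟩ := hentire.isExactOn_univ
  refine ⟨P, fun z => ?_⟩
  have hsq : HasDerivAt (fun ζ : ℂ => ζ ^ 2) (2 * z) z := by simpa using hasDerivAt_pow 2 z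
  have hderiv := ((hsq.cexp.mul hsq.neg.cexp.cexp).add hsq).sub
    ((hP _ (Set.mem_univ (Complex.exp (-z ^ 2)))).comp z hsq.neg.cexp)
  refine (hderiv.div_const 2).congr_deriv ?_
  have hslope : Complex.exp (-z ^ 2) * dslope Complex.exp 0 (Complex.exp (-z ^ 2)) =
      expExp z - 1 := by
    simpa [expExp] using sub_smul_dslope Complex.exp 0 (Complex.exp (-z ^ 2))
  have hcancel : Complex.exp (z ^ 2) * Complex.exp (-z ^ 2) = 1 := by
    rw [← Complex.exp_add, add_neg_cancel, Complex.exp_zero]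
  simp only [Pi.neg_apply]
  rw [expExp] at hslope ⊢
  linear_combination z * hslope - z * Complex.exp (Complex.exp (-z ^ 2)) * hcancel

lemma gammaInt_expExp_mul_self_mul_cexp_sq (hM : 0 < M) :
    gammaInt M (fun ζ => expExp ζ * (ζ * Complex.exp (ζ ^ 2))) = -(Real.pi * Complex.I) := by
  obtain ⟨P, hP⟩ := exists_primitive_mul_cexp_sq_mul_expExp
  have hbranches : (∫ τ in Set.Ioi M, expExp (branch (-1) τ) *
        (branch (-1) τ * Complex.exp (branch (-1) τ ^ 2)) * branchDeriv (-1) τ) =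
      ∫ τ in Set.Ioi M, expExp (branch 1 τ) *
        (branch 1 τ * Complex.exp (branch 1 τ ^ 2)) * branchDeriv 1 τ := by
    simpa only [expExp, Complex.exp_neg, mul_left_comm] using
      integral_branch_neg_one_eq_integral_branch_one hM fun w => Complex.exp w⁻¹ * w
  rw [gammaInt_eq_branch, hbranches, sub_self, zero_sub, 
    integral_segment_of_primitive M (by fun_prop) hP]
  simp only [expExp, Complex.exp_neg, exp_branch_sq (ε := 1) (by simp) hM.ne',
    exp_branch_sq (ε := -1) (by simp) hM.ne']
  rw [branch_sq (by simp) hM.ne', branch_sq (by simp) hM.ne']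
  push_cast
  ring

lemma norm_cexp_sq_le {A : ℝ} {z : ℂ} (hz : |z.re| ≤ A) :
    ‖Complex.exp (z ^ 2)‖ ≤ Real.exp (A ^ 2) := by
  rw [Complex.norm_exp, Real.exp_le_exp, sq, Complex.mul_re]
  nlinarith [sq_le_sq' (neg_le_of_abs_le hz) (le_of_abs_le hz), sq_nonneg z.im]

end ExpExp

section ContourDensity

variable {M : ℝ}

/-- The function `f(λ) = (1/2πi) ∫_{γ_M} exp(exp(-ζ²)) e^{ζλ} dζ`, whose heat evolution is the null
solution. -/
noncomputable def contourDensity (M lam : ℝ) : ℂ :=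
  1 / (2 * Real.pi * Complex.I) * gammaInt M fun ζ => expExp ζ * Complex.exp (ζ * lam)

lemma contourDensity_eq_of_le {M' : ℝ} (hM : 0 < M) (hMM' : M ≤ M') :
    contourDensity M = contourDensity M' := by
  funext lam
  rw [contourDensity, contourDensity, gammaInt_eq_of_le hM hMM'
    (by fun_prop) (gammaIntegrable_expExp_mul_cexp hM lam)]

lemma contourDensity_eq_integral (hM : 0 < M) (lam : ℝ) :
    contourDensity M lam = 1 / (2 * Real.pi * Complex.I) *
      ∫ p : ℂ × ℂ, expExp p.1 * p.2 * Complex.exp (p.1 * lam) ∂contourMeasure M := by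
  rw [contourDensity, gammaInt_eq_integral_contourMeasure hM
    (by fun_prop) (gammaIntegrable_expExp_mul_cexp hM lam)]
  simp only [mul_right_comm]

lemma ae_contourMeasure_abs_re_le (hM : 0 < M) :
    ∀ᵐ p ∂contourMeasure M, |p.1.re| ≤ Real.pi / (2 * M) :=
  (ae_contourMeasure_mem_gammaTrace hM).mono fun _ => abs_re_le_of_mem_gammaTrace hM

lemma gaussianIntegrable_contourDensity (hM : 0 < M) : GaussianIntegrable (contourDensity M) := by
  refine .of_integrable_heatMode fun t ht => ?_
  simp only [smul_eq_mul, contourDensity_eq_integral hM, mul_left_comm (heatMode _ _)]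
  exact (integrable_heatMode_mul_integral measurable_fst.aestronglyMeasurable
    (ae_contourMeasure_abs_re_le hM) (integrable_expExp hM) ht).const_mul _

lemma heatEvolution_contourDensity (hM : 0 < M) (x : ℝ) {t : ℝ} (ht : 0 < t) :
    heatEvolution (contourDensity M) (x, t) = 1 / (2 * Real.pi * Complex.I) *
      (√(Real.pi / t) * ∫ p : ℂ × ℂ, expExp p.1 * p.2 *
        Complex.exp ((Complex.I * x + p.1) ^ 2 / (4 * t)) ∂contourMeasure M) := by
  simp only [heatEvolution, smul_eq_mul, contourDensity_eq_integral hM,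
    mul_left_comm (heatMode _ _)]
  rw [MeasureTheory.integral_const_mul,
    integral_heatMode_mul_integral measurable_fst.aestronglyMeasurable
      (ae_contourMeasure_abs_re_le hM) (integrable_expExp hM) x ht]

lemma tendsto_sqrt_pi_div_mul_exp_neg_div :
    Tendsto (fun t : ℝ => √(Real.pi / t) * Real.exp (-1 / (4 * t))) (𝓝[>] 0) (𝓝 0) := by
  have hdecay := ((tendsto_rpow_mul_exp_neg_mul_atTop_nhds_zero (1 / 2) (1 / 4)
    (by norm_num)).comp tendsto_inv_nhdsGT_zero).const_mul √Real.pi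
  rw [mul_zero] at hdecay
  refine hdecay.congr fun t => ?_
  rw [Function.comp_apply, ← Real.sqrt_eq_rpow, ← mul_assoc, ← Real.sqrt_mul Real.pi_pos.le,
    ← div_eq_mul_inv]
  ring_nf

lemma re_I_mul_add_sq_le_neg_one {x : ℝ} (hMx : |x| + 2 ≤ M) {ζ : ℂ} (hζ : ζ ∈ gammaTrace M) :
    ((Complex.I * x + ζ) ^ 2).re ≤ -1 := by
  have hM2 : 2 ≤ M := by linarith [abs_nonneg x]
  have hre : |ζ.re| ≤ 1 := by
    refine (abs_re_le_of_mem_gammaTrace (by linarith) hζ).trans ?_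
    rw [div_le_one (by linarith)]
    linarith [Real.pi_le_four]
  have him : 2 ≤ x + ζ.im := by linarith [le_im_of_mem_gammaTrace hζ, neg_abs_le x]
  have hsq : ((Complex.I * x + ζ) ^ 2).re = ζ.re ^ 2 - (x + ζ.im) ^ 2 := by
    simp [sq]
  rw [hsq]
  nlinarith [(sq_le_one_iff_abs_le_one ζ.re).2 hre]

lemma norm_heatEvolution_contourDensity_le {x t : ℝ} (hMx : |x| + 2 ≤ M) (ht : 0 < t) :
    ‖heatEvolution (contourDensity M) (x, t)‖ ≤ ‖1 / (2 * Real.pi * Complex.I)‖ *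
      (√(Real.pi / t) * Real.exp (-1 / (4 * t))) *
        ∫ p, ‖expExp p.1 * p.2‖ ∂contourMeasure M := by
  have hM : 0 < M := by linarith [abs_nonneg x]
  rw [heatEvolution_contourDensity hM x ht, norm_mul, norm_mul, Complex.norm_real,
    Real.norm_of_nonneg (Real.sqrt_nonneg _), mul_assoc ‖_‖, mul_assoc √_,
    ← MeasureTheory.integral_const_mul (Real.exp _)]
  gcongr
  refine norm_integral_le_of_norm_le ((integrable_expExp hM).norm.const_mul _) ?_
  filter_upwards [ae_contourMeasure_mem_gammaTrace hM] with p hp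
  have hre :
      ((Complex.I * x + p.1) ^ 2 / (4 * t)).re = ((Complex.I * x + p.1) ^ 2).re / (4 * t) := by
    exact_mod_cast Complex.div_ofReal_re _ (4 * t)
  rw [norm_mul, mul_comm, Complex.norm_exp, hre]
  gcongr
  exact re_I_mul_add_sq_le_neg_one hMx hp

lemma tendsto_heatEvolution_contourDensity (hM : 0 < M) (x : ℝ) :
    Tendsto (fun t => heatEvolution (contourDensity M) (x, t)) (𝓝[>] 0) (𝓝 0) := by
  rw [contourDensity_eq_of_le hM (le_max_left M (|x| + 2))]
  have hdecay := (tendsto_sqrt_pi_div_mul_exp_neg_div.const_mul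
    ‖1 / (2 * Real.pi * Complex.I)‖).mul_const
      (∫ p, ‖expExp p.1 * p.2‖ ∂contourMeasure (max M (|x| + 2)))
  rw [mul_zero, zero_mul] at hdecay
  refine squeeze_zero_norm' ?_ hdecay
  filter_upwards [self_mem_nhdsWithin] with t ht
  exact norm_heatEvolution_contourDensity_le (le_max_right _ _) ht

lemma heatEvolution_contourDensity_one_div_four (hM : 0 < M) (x : ℝ) :
    heatEvolution (contourDensity M) (x, 1 / 4) = 1 / (2 * Real.pi * Complex.I) *
      (√(Real.pi / (1 / 4)) * (Complex.exp (-(x : ℂ) ^ 2) * ∫ p : ℂ × ℂ,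
        expExp p.1 * Complex.exp (p.1 ^ 2) * p.2 *
          Complex.exp (x * (2 * Complex.I * p.1)) ∂contourMeasure M)) := by
  rw [heatEvolution_contourDensity hM x (by norm_num),
    ← MeasureTheory.integral_const_mul (Complex.exp _)]
  congr 2
  refine integral_congr_ae (Eventually.of_forall fun p => ?_)
  have hexp : Complex.exp ((Complex.I * x + p.1) ^ 2 / (4 * (1 / 4 : ℝ))) =
      Complex.exp (-(x : ℂ) ^ 2) * Complex.exp (p.1 ^ 2) *
        Complex.exp (x * (2 * Complex.I * p.1)) := by
    rw [← Complex.exp_add, ← Complex.exp_add]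
    congr 1
    push_cast
    linear_combination (x : ℂ) ^ 2 * Complex.I_sq
  beta_reduce
  rw [hexp]
  ring

lemma gammaIntegrable_expExp_mul_cexp_sq {g : ℂ → ℂ} {c : ℝ} (hM : 0 < M) (hg : Continuous g)
    (hc : 0 ≤ c) (hbound : ∀ ζ, ‖g ζ‖ ≤ Real.exp (c * ‖ζ‖)) :
    GammaIntegrable M fun ζ => expExp ζ * (g ζ * Complex.exp (ζ ^ 2)) := by
  refine gammaIntegrable_expExp_mul (C := Real.exp ((Real.pi / (2 * M)) ^ 2)) hM (by fun_prop) hc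
    fun ζ hζ => ?_
  rw [norm_mul, mul_comm]
  gcongr
  · exact norm_cexp_sq_le (abs_re_le_of_mem_gammaTrace hM hζ)
  · exact hbound ζ

lemma integral_expExp_mul_cexp_sq_mul_self (hM : 0 < M) :
    ∫ p : ℂ × ℂ, expExp p.1 * Complex.exp (p.1 ^ 2) * p.2 * (2 * Complex.I * p.1)
      ∂contourMeasure M = 2 * Real.pi := by
  have hself : GammaIntegrable M fun ζ => expExp ζ * (ζ * Complex.exp (ζ ^ 2)) := by
    refine gammaIntegrable_expExp_mul_cexp_sq hM continuous_id zero_le_one fun ζ => ?_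
    rw [one_mul]
    linarith [Real.add_one_le_exp ‖ζ‖]
  calc ∫ p : ℂ × ℂ, expExp p.1 * Complex.exp (p.1 ^ 2) * p.2 * (2 * Complex.I * p.1)
        ∂contourMeasure M
      = 2 * Complex.I *
          ∫ p : ℂ × ℂ, expExp p.1 * (p.1 * Complex.exp (p.1 ^ 2)) * p.2 ∂contourMeasure M := by
        rw [← MeasureTheory.integral_const_mul]
        exact integral_congr_ae (Eventually.of_forall fun p => by ring)
    _ = 2 * Complex.I * -(Real.pi * Complex.I) := by
        rw [← gammaInt_eq_integral_contourMeasure hM (by fun_prop) hself,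
          gammaInt_expExp_mul_self_mul_cexp_sq hM]
    _ = 2 * Real.pi := by linear_combination (-2 * Real.pi : ℂ) * Complex.I_sq

lemma integrable_norm_expExp_mul_cexp_sq_mul_exp_norm (hM : 0 < M) :
    Integrable (fun p : ℂ × ℂ => ‖expExp p.1 * Complex.exp (p.1 ^ 2) * p.2‖ *
      Real.exp (1 * ‖2 * Complex.I * p.1‖)) (contourMeasure M) := by
  have hexp : GammaIntegrable M
      fun ζ => expExp ζ * ((Real.exp (2 * ‖ζ‖) : ℝ) * Complex.exp (ζ ^ 2)) :=
    gammaIntegrable_expExp_mul_cexp_sq hM (by fun_prop) zero_le_two fun ζ => by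
      rw [Complex.norm_real, Real.norm_eq_abs, Real.abs_exp]
  refine ((gammaIntegrable_iff_integrable_contourMeasure hM (by fun_prop)).1 hexp).norm.congr
    (Eventually.of_forall fun p => ?_)
  simp only [norm_mul, Complex.norm_real, Real.norm_eq_abs, Real.abs_exp, Complex.norm_I,
    Complex.norm_ofNat, mul_one, one_mul]
  ring

lemma exists_heatEvolution_contourDensity_ne_zero (hM : 0 < M) :
    ∃ x : ℝ, heatEvolution (contourDensity M) (x, 1 / 4) ≠ 0 := by
  obtain ⟨x, hx⟩ := exists_integral_mul_cexp_ne_zero one_pos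
    (Continuous.aestronglyMeasurable (by fun_prop))
    (Continuous.aestronglyMeasurable (by fun_prop))
    (integrable_norm_expExp_mul_cexp_sq_mul_exp_norm hM)
    (by simp [integral_expExp_mul_cexp_sq_mul_self hM, Real.pi_ne_zero])
  have hsqrt : (√(Real.pi / (1 / 4)) : ℂ) ≠ 0 := by
    exact_mod_cast (Real.sqrt_pos.2 (by positivity)).ne'
  refine ⟨x, ?_⟩
  rw [heatEvolution_contourDensity_one_div_four hM]
  exact mul_ne_zero (by simp [Real.pi_ne_zero])
    (mul_ne_zero hsqrt (mul_ne_zero (Complex.exp_ne_zero _) hx))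

end ContourDensity

theorem statement19 (M : ℝ) (hM : 0 < M)
    (f : ℝ → ℂ)
    (hf : ∀ lam : ℝ, f lam = (1 / (2 * Real.pi * Complex.I)) *
      gammaInt M (fun ζ : ℂ => Complex.exp (Complex.exp (-ζ ^ 2)) * Complex.exp (ζ * lam)))
    (H : ℝ → ℝ → ℂ)
    (hH : ∀ x t : ℝ, H x t =
      ∫ lam : ℝ, Complex.exp (-(t : ℂ) * lam ^ 2) * Complex.exp (Complex.I * x * lam) * f lam) :
    (∀ x t : ℝ, 0 < t → MeasureTheory.Integrable (fun lam : ℝ =>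
      Complex.exp (-(t : ℂ) * lam ^ 2) * Complex.exp (Complex.I * x * lam) * f lam)) ∧
    ContDiffOn ℝ (⊤ : ℕ∞) (fun q : ℝ × ℝ => H q.1 q.2) (Set.univ ×ˢ Set.Ioi (0:ℝ)) ∧
    (∀ x t : ℝ, 0 < t →
      deriv (fun τ : ℝ => H x τ) t = iteratedDeriv 2 (fun ξ : ℝ => H ξ t) x) ∧
    (∀ x : ℝ, Filter.Tendsto (fun t : ℝ => H x t)
      (nhdsWithin 0 (Set.Ioi (0:ℝ))) (nhds 0)) ∧
    (∃ x t : ℝ, 0 < t ∧ H x t ≠ 0) := by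
  obtain rfl : f = contourDensity M := funext hf
  obtain rfl : H = fun x t => heatEvolution (contourDensity M) (x, t) :=
    funext fun x => funext fun t => hH x t
  have hf' := gaussianIntegrable_contourDensity hM
  refine ⟨fun x t ht => hf'.integrable_heatMode_smul (q := (x, t)) ht,
    contDiffOn_heatEvolution hf',
    fun x t ht => deriv_time_heatEvolution_eq_iteratedDeriv_two hf' x ht,
    tendsto_heatEvolution_contourDensity hM, ?_⟩
  obtain ⟨x, hx⟩ := exists_heatEvolution_contourDensity_ne_zero hM
  exact ⟨x, 1 / 4, by norm_num, hx⟩
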